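/- arXiv:1107.2361 — 5 statements merged into one kernel-verified Lean document; each statement's English description precedes it below -/
import Mathlib

section
/- Let L be a g-symmetric endomorphism of V and let p be a real polynomial with p(L) = 0 (for instance the minimal polynomial of L). Then for every g-skew-symmetric endomorphism X of V, the endomorphism D_p(L,X) lies in 𝔤_L, i.e. D_p(L,X) is g-skew-symmetric and commutes with L. -/
/-!
Write `D_p(L, X) = ∑ aₘ ∑ⱼ L ^ (m - 1 - j) * X * L ^ j`, the derivative at `L` of `p` in the
direction `X`. Passing to adjoints reverses each product, and the reversal `j ↦ m - 1 - j` permutes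
the summands, so `D_p(L, X)` has adjoint `D_p(L, -X) = -D_p(L, X)`. The commutator with `L`
telescopes to `X * p(L) - p(L) * X`, which vanishes when `p(L) = 0`.
-/

open Polynomial

section DirectionalDerivative

/-- The derivative of the noncommutative power map `L ↦ L ^ m` at `L` in the direction `X`. At
`m = 0` the truncated subtraction is harmless, the sum being empty. -/
def powDirDeriv {A : Type*} [Semiring A] (L X : A) (m : ℕ) : A :=
  ∑ j ∈ Finset.range m, L ^ (m - 1 - j) * X * L ^ j

theorem powDirDeriv_neg {A : Type*} [Ring A] (L X : A) (m : ℕ) :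
    powDirDeriv L (-X) m = -powDirDeriv L X m := by
  simp only [powDirDeriv, mul_neg, neg_mul, Finset.sum_neg_distrib]

theorem powDirDeriv_mul_sub_mul_powDirDeriv {A : Type*} [Ring A] (L X : A) (m : ℕ) :
    powDirDeriv L X m * L - L * powDirDeriv L X m = X * L ^ m - L ^ m * X := by
  have telescope := Finset.sum_range_sub (fun j ↦ L ^ (m - j) * X * L ^ j) m
  simp only [Nat.sub_self, pow_zero, one_mul, Nat.sub_zero, mul_one] at telescope
  rw [← telescope, powDirDeriv, Finset.sum_mul, Finset.mul_sum, ← Finset.sum_sub_distrib]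
  refine Finset.sum_congr rfl fun j hj ↦ ?_
  have hjm : j < m := Finset.mem_range.mp hj
  rw [show m - (j + 1) = m - 1 - j by lia, show m - j = m - 1 - j + 1 by lia, pow_succ L j,
    pow_succ' L (m - 1 - j)]
  simp only [mul_assoc]

/-- The derivative `D_p(L, X)` of the noncommutative polynomial map `L ↦ p(L)` at `L` in the
direction `X`, as a linear map in `p`. -/
noncomputable def polyDirDeriv {R A : Type*} [CommSemiring R] [Semiring A] [Algebra R A]
    (L X : A) : R[X] →ₗ[R] A :=
  lsum fun m ↦ LinearMap.toSpanSingleton R A (powDirDeriv L X m)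

@[simp]
theorem polyDirDeriv_monomial {R A : Type*} [CommSemiring R] [Semiring A] [Algebra R A]
    (L X : A) (m : ℕ) (c : R) :
    polyDirDeriv L X (monomial m c) = c • powDirDeriv L X m := by
  simp [polyDirDeriv, sum_monomial_index]

variable {R A : Type*} [CommSemiring R] [Ring A] [Algebra R A]

theorem polyDirDeriv_neg (L X : A) (p : R[X]) :
    polyDirDeriv L (-X) p = -polyDirDeriv L X p := by
  induction p using Polynomial.induction_on' with
  | add p q hp hq => rw [map_add, map_add, hp, hq, neg_add]
  | monomial m c => rw [polyDirDeriv_monomial, polyDirDeriv_monomial, powDirDeriv_neg, smul_neg]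

theorem polyDirDeriv_mul_sub_mul_polyDirDeriv (L X : A) (p : R[X]) :
    polyDirDeriv L X p * L - L * polyDirDeriv L X p = X * aeval L p - aeval L p * X := by
  induction p using Polynomial.induction_on' with
  | add p q hp hq =>
    simp only [map_add, add_mul, mul_add, add_sub_add_comm, hp, hq]
  | monomial m c =>
    simp only [polyDirDeriv_monomial, aeval_monomial, ← Algebra.smul_def, smul_mul_assoc,
      mul_smul_comm, ← smul_sub, powDirDeriv_mul_sub_mul_powDirDeriv]

theorem commute_polyDirDeriv_of_aeval_eq_zero {L : A} {p : R[X]} (hp : aeval L p = 0) (X : A) :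
    Commute (polyDirDeriv L X p) L := by
  refine sub_eq_zero.mp ?_
  rw [polyDirDeriv_mul_sub_mul_polyDirDeriv, hp, mul_zero, zero_mul, sub_zero]

end DirectionalDerivative

section Adjoint

theorem isAdjointPair_pow {R M N : Type*} [CommSemiring R] [AddCommMonoid M] [Module R M]
    [AddCommMonoid N] [Module R N] {B : M →ₗ[R] M →ₗ[R] N} {f f' : Module.End R M}
    (h : B.IsAdjointPair B f f') (k : ℕ) : B.IsAdjointPair B ⇑(f ^ k) ⇑(f' ^ k) := by
  induction k with
  | zero => exact LinearMap.isAdjointPair_one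
  | succ k ih =>
    rw [pow_succ, pow_succ']
    exact ih.mul h

theorem isAdjointPair_powDirDeriv {R M N : Type*} [CommSemiring R] [AddCommMonoid M] [Module R M]
    [AddCommMonoid N] [Module R N] {B : M →ₗ[R] M →ₗ[R] N} {L L' X X' : Module.End R M}
    (hL : B.IsAdjointPair B L L') (hX : B.IsAdjointPair B X X') (m : ℕ) :
    B.IsAdjointPair B ⇑(powDirDeriv L X m) ⇑(powDirDeriv L' X' m) := by
  intro u v
  rw [powDirDeriv, powDirDeriv, ← Finset.sum_range_reflect _ m]
  simp only [LinearMap.sum_apply, map_sum]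
  refine Finset.sum_congr rfl fun j hj ↦ ?_
  have hjm : j < m := Finset.mem_range.mp hj
  rw [show m - 1 - (m - 1 - j) = j by lia, mul_assoc (L' ^ (m - 1 - j))]
  exact ((isAdjointPair_pow hL j).mul hX).mul (isAdjointPair_pow hL (m - 1 - j)) u v

variable {R M N : Type*} [CommRing R] [AddCommGroup M] [Module R M] [AddCommGroup N] [Module R N]
  {B : M →ₗ[R] M →ₗ[R] N} {L L' X X' : Module.End R M}

theorem isAdjointPair_polyDirDeriv (hL : B.IsAdjointPair B L L') (hX : B.IsAdjointPair B X X')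
    (p : R[X]) : B.IsAdjointPair B (polyDirDeriv L X p) (polyDirDeriv L' X' p) := by
  induction p using Polynomial.induction_on' with
  | add p q hp hq =>
    rw [map_add, map_add]
    exact hp.add hq
  | monomial m c =>
    rw [polyDirDeriv_monomial, polyDirDeriv_monomial]
    exact (isAdjointPair_powDirDeriv hL hX m).smul c

theorem isSkewAdjoint_polyDirDeriv (hL : B.IsSelfAdjoint L) (hX : B.IsSkewAdjoint X)
    (p : R[X]) : B.IsSkewAdjoint (polyDirDeriv L X p) := by
  have hX' : B.IsAdjointPair B X (-X : Module.End R M) := hX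
  have h := isAdjointPair_polyDirDeriv hL hX' p
  rwa [polyDirDeriv_neg] at h

theorem stmt2_general (hL : B.IsSelfAdjoint L) {p : R[X]} (hp : aeval L p = 0)
    (hX : B.IsSkewAdjoint X) :
    B.IsSkewAdjoint (polyDirDeriv L X p) ∧ Commute (polyDirDeriv L X p) L :=
  ⟨isSkewAdjoint_polyDirDeriv hL hX p, commute_polyDirDeriv_of_aeval_eq_zero hp X⟩

end Adjoint

/-- If `L` is `g`-symmetric and `p` is a real polynomial with `p(L) = 0`,
then for every `g`-skew-symmetric endomorphism `X`, the endomorphism `D_p(L,X)` lies in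
`𝔤_L`: it is `g`-skew-symmetric and commutes with `L`. -/
theorem stmt2 (V : Type*) [AddCommGroup V] [Module ℝ V] [FiniteDimensional ℝ V]
    (g : LinearMap.BilinForm ℝ V) (hg_symm : ∀ u v : V, g u v = g v u)
    (hg_nd : g.Nondegenerate)
    (N : ℕ) (a : ℕ → ℝ) (L : Module.End ℝ V)
    (hL : ∀ u v : V, g (L u) v = g u (L v))
    (hpL : ∑ m ∈ Finset.range (N + 1), a m • L ^ m = 0) :
    ∀ X : Module.End ℝ V, (∀ u v : V, g (X u) v = - g u (X v)) →
      (∀ u v : V,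
        g ((∑ m ∈ Finset.range (N + 1), a m •
              ∑ j ∈ Finset.range m, L ^ (m - 1 - j) * X * L ^ j) u) v =
        - g u ((∑ m ∈ Finset.range (N + 1), a m •
              ∑ j ∈ Finset.range m, L ^ (m - 1 - j) * X * L ^ j) v)) ∧
      (∑ m ∈ Finset.range (N + 1), a m •
          ∑ j ∈ Finset.range m, L ^ (m - 1 - j) * X * L ^ j) * L =
        L * (∑ m ∈ Finset.range (N + 1), a m •
          ∑ j ∈ Finset.range m, L ^ (m - 1 - j) * X * L ^ j) := by
  intro X hX
  simpa [LinearMap.IsSkewAdjoint, LinearMap.IsAdjointPair, powDirDeriv, commute_iff_eq] using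
    stmt2_general (p := ∑ m ∈ Finset.range (N + 1), monomial m (a m)) (X := X) hL
      (by simpa [aeval_monomial, ← Algebra.smul_def] using hpL) (fun u v ↦ by simpa using hX u v)
end

section
/- Let L be a g-symmetric endomorphism of V and let p be a real polynomial with p(L) = 0 (for instance the minimal polynomial of L). Then the alternating bilinear map R(u,v) = D_p(L, u∧v) is a formal curvature tensor on V all of whose values lie in 𝔤_L: it satisfies the Bianchi identity R(u,v)w + R(v,w)u + R(w,u)v = 0 for all u,v,w ∈ V, and each R(u,v) is g-skew-symmetric and commutes with L. -/
/-- The wedge `u ∧ v` of two vectors w.r.t. a bilinear form `g`: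
the endomorphism `w ↦ g v w • u - g u w • v`. -/
noncomputable def wedge {V : Type*} [AddCommGroup V] [Module ℝ V]
    (g : LinearMap.BilinForm ℝ V) (u v : V) : Module.End ℝ V :=
  (g v).smulRight u - (g u).smulRight v

/-- A formal curvature tensor on `V`: an alternating bilinear map
`R : V × V → End(V)` satisfying the Bianchi identity. -/
def IsFormalCurvature {V : Type*} [AddCommGroup V] [Module ℝ V]
    (R : V → V → Module.End ℝ V) : Prop :=
  (∀ u u' v : V, R (u + u') v = R u v + R u' v) ∧
  (∀ (c : ℝ) (u v : V), R (c • u) v = c • R u v) ∧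
  (∀ u v v' : V, R u (v + v') = R u v + R u v') ∧
  (∀ (c : ℝ) (u v : V), R u (c • v) = c • R u v) ∧
  (∀ u : V, R u u = 0) ∧
  (∀ u v w : V, R u v w + R v w u + R w u v = 0)

/-!
`D_p(L, ·)` is the derivative of `L ↦ p(L)`. As left and right multiplication by `L` commute, the
geometric sum formula gives `[L, D_p(L, X)] = [p(L), X]`, which vanishes when `p(L) = 0`.
Passing to `g`-adjoints reverses products, hence turns `D_p(L, X)` into `D_p(L*, X*)`; with `L* = L`
and `X* = -X` this is skew-symmetry. The Bianchi identity already holds for each summand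
`L ^ (m - 1 - j) (u ∧ v) L ^ j`, because the form `g(·, L ^ j ·)` is symmetric.
-/

open Polynomial

section Algebra

variable {R A : Type*} [CommRing R] [Ring A] [Algebra R A]

variable (R) in
/-- The derivative of `L ↦ L ^ m` at `L`, sending `X` to `∑ j < m, L ^ (m - 1 - j) * X * L ^ j`.
It is encoded as a two-variable geometric sum in right and left multiplication by `L`. -/
noncomputable def powDeriv (L : A) (m : ℕ) : Module.End R A :=
  ∑ j ∈ Finset.range m, LinearMap.mulRight R L ^ j * LinearMap.mulLeft R L ^ (m - 1 - j)

theorem powDeriv_apply (L X : A) (m : ℕ) :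
    powDeriv R L m X = ∑ j ∈ Finset.range m, L ^ (m - 1 - j) * X * L ^ j := by
  simp only [powDeriv, LinearMap.sum_apply, Module.End.mul_apply, LinearMap.pow_mulLeft,
    LinearMap.pow_mulRight, LinearMap.mulLeft_apply, LinearMap.mulRight_apply]

theorem mulRight_sub_mulLeft_mul_powDeriv (L : A) (m : ℕ) :
    (LinearMap.mulRight R L - LinearMap.mulLeft R L) * powDeriv R L m =
      LinearMap.mulRight R (L ^ m) - LinearMap.mulLeft R (L ^ m) := by
  have mulRight_commute_mulLeft : Commute (LinearMap.mulRight R L) (LinearMap.mulLeft R L) :=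
    (LinearMap.commute_mulLeft_right L L).symm
  rw [powDeriv, mulRight_commute_mulLeft.mul_geom_sum₂, LinearMap.pow_mulRight,
    LinearMap.pow_mulLeft]

theorem powDeriv_mul_sub_mul_powDeriv (L X : A) (m : ℕ) :
    powDeriv R L m X * L - L * powDeriv R L m X = X * L ^ m - L ^ m * X :=
  LinearMap.congr_fun (mulRight_sub_mulLeft_mul_powDeriv L m) X

/-- The derivative `D_p(L, ·)` of `L ↦ p(L)` at `L`, linear in the polynomial `p` as well as in the
direction. -/
noncomputable def aevalDeriv (L : A) : R[X] →ₗ[R] Module.End R A :=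
  Polynomial.lsum fun m => LinearMap.toSpanSingleton R _ (powDeriv R L m)

theorem aevalDeriv_monomial (L : A) (m : ℕ) (c : R) :
    aevalDeriv L (monomial m c) = c • powDeriv R L m := by
  simp [aevalDeriv, Polynomial.lsum_apply]

theorem aevalDeriv_sum_monomial_apply (L X : A) (s : Finset ℕ) (a : ℕ → R) :
    aevalDeriv L (∑ m ∈ s, monomial m (a m)) X =
      ∑ m ∈ s, a m • ∑ j ∈ Finset.range m, L ^ (m - 1 - j) * X * L ^ j := by
  simp only [map_sum, aevalDeriv_monomial, LinearMap.sum_apply, LinearMap.smul_apply,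
    powDeriv_apply]

theorem aevalDeriv_mul_sub_mul_aevalDeriv (L X : A) (p : R[X]) :
    aevalDeriv L p X * L - L * aevalDeriv L p X = X * aeval L p - aeval L p * X := by
  induction p using Polynomial.induction_on' with
  | add p q hp hq =>
    simp only [map_add, LinearMap.add_apply, add_mul, mul_add, add_sub_add_comm, hp, hq]
  | monomial m c =>
    simp only [aevalDeriv_monomial, LinearMap.smul_apply, aeval_monomial, ← Algebra.smul_def,
      smul_mul_assoc, mul_smul_comm, ← smul_sub, powDeriv_mul_sub_mul_powDeriv]

theorem commute_aevalDeriv_of_aeval_eq_zero {L : A} {p : R[X]} (hp : aeval L p = 0) (X : A) :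
    Commute (aevalDeriv L p X) L :=
  sub_eq_zero.1 <| by
    rw [aevalDeriv_mul_sub_mul_aevalDeriv, hp, mul_zero, zero_mul, sub_zero]

end Algebra

section Adjoint

variable {R M : Type*} [CommRing R] [AddCommGroup M] [Module R M] {B : LinearMap.BilinForm R M}
  {L L' X X' : Module.End R M}

theorem isAdjointPair_pow_s4 (hL : B.IsAdjointPair B L L') (n : ℕ) :
    B.IsAdjointPair B ⇑(L ^ n) ⇑(L' ^ n) := by
  induction n with
  | zero => exact LinearMap.isAdjointPair_one
  | succ n ih =>
    rw [pow_succ, pow_succ']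
    exact ih.mul hL

theorem isAdjointPair_powDeriv (hL : B.IsAdjointPair B L L') (hX : B.IsAdjointPair B X X')
    (m : ℕ) : B.IsAdjointPair B (powDeriv R L m X) (powDeriv R L' m X') := by
  have adjoint_summand (i j : ℕ) :
      B.IsAdjointPair B ⇑(L ^ i * X * L ^ j) ⇑(L' ^ j * X' * L' ^ i) := by
    rw [mul_assoc (L' ^ j)]
    exact ((isAdjointPair_pow_s4 hL i).mul hX).mul (isAdjointPair_pow_s4 hL j)
  intro x y
  simp only [powDeriv_apply, LinearMap.sum_apply, map_sum]
  rw [← Finset.sum_range_reflect]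
  refine Finset.sum_congr rfl fun j hj => ?_
  rw [Nat.sub_sub_self (Nat.le_sub_one_of_lt (Finset.mem_range.1 hj))]
  exact adjoint_summand _ _ x y

theorem isAdjointPair_aevalDeriv (hL : B.IsAdjointPair B L L') (hX : B.IsAdjointPair B X X')
    (p : R[X]) : B.IsAdjointPair B (aevalDeriv L p X) (aevalDeriv L' p X') := by
  induction p using Polynomial.induction_on' with
  | add p q hp hq =>
    rw [map_add, map_add]
    exact hp.add hq
  | monomial m c =>
    rw [aevalDeriv_monomial, aevalDeriv_monomial]
    exact (isAdjointPair_powDeriv hL hX m).smul c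

theorem isSkewAdjoint_aevalDeriv (hL : B.IsSelfAdjoint L) (hX : B.IsSkewAdjoint X) (p : R[X]) :
    B.IsSkewAdjoint (aevalDeriv L p X) := by
  have hX' : B.IsAdjointPair B X ⇑(-X) := hX
  have adjoint_neg := isAdjointPair_aevalDeriv hL hX' p
  rwa [map_neg] at adjoint_neg

end Adjoint

section Wedge

variable {V : Type*} [AddCommGroup V] [Module ℝ V] {g : LinearMap.BilinForm ℝ V}

theorem wedge_apply (u v w : V) : wedge g u v w = g v w • u - g u w • v :=
  rfl

theorem wedge_self (u : V) : wedge g u u = 0 :=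
  sub_self _

theorem wedge_swap (u v : V) : wedge g v u = -wedge g u v :=
  (neg_sub _ _).symm

theorem wedge_add_left (u u' v : V) : wedge g (u + u') v = wedge g u v + wedge g u' v := by
  ext w
  simp only [wedge_apply, LinearMap.add_apply, map_add]
  module

theorem wedge_smul_left (c : ℝ) (u v : V) : wedge g (c • u) v = c • wedge g u v := by
  ext w
  simp only [wedge_apply, LinearMap.smul_apply, map_smul, smul_eq_mul]
  module

theorem wedge_add_right (u v v' : V) : wedge g u (v + v') = wedge g u v + wedge g u v' := by
  rw [wedge_swap, wedge_add_left, neg_add, ← wedge_swap, ← wedge_swap]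

theorem wedge_smul_right (c : ℝ) (u v : V) : wedge g u (c • v) = c • wedge g u v := by
  rw [wedge_swap, wedge_smul_left, ← smul_neg, ← wedge_swap]

theorem isSkewAdjoint_wedge (hg : g.IsSymm) (u v : V) : g.IsSkewAdjoint (wedge g u v) := by
  intro x y
  simp only [wedge_apply, Pi.neg_apply, map_neg, map_sub, map_smul, LinearMap.neg_apply,
    LinearMap.sub_apply, LinearMap.smul_apply, smul_eq_mul, hg.eq x]
  ring

theorem wedge_apply_cyclic (hg : g.IsSymm) {S : Module.End ℝ V} (hS : g.IsSelfAdjoint S)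
    (u v w : V) : wedge g u v (S w) + wedge g v w (S u) + wedge g w u (S v) = 0 := by
  have form_symm (x y : V) : g x (S y) = g y (S x) := (hS x y).symm.trans (hg.eq _ _)
  simp only [wedge_apply, form_symm v w, form_symm u w, form_symm v u]
  abel

theorem aevalDeriv_wedge_apply_cyclic (hg : g.IsSymm) {L : Module.End ℝ V}
    (hL : g.IsSelfAdjoint L) (p : ℝ[X]) (u v w : V) :
    aevalDeriv L p (wedge g u v) w + aevalDeriv L p (wedge g v w) u +
      aevalDeriv L p (wedge g w u) v = 0 := by
  induction p using Polynomial.induction_on' with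
  | add p q hp hq =>
    simp only [map_add, LinearMap.add_apply, add_add_add_comm, hp, hq, add_zero]
  | monomial m c =>
    simp only [aevalDeriv_monomial, LinearMap.smul_apply, powDeriv_apply, LinearMap.sum_apply,
      Module.End.mul_apply, ← smul_add, ← Finset.sum_add_distrib, ← map_add,
      wedge_apply_cyclic hg (isAdjointPair_pow_s4 hL _), map_zero, Finset.sum_const_zero, smul_zero]

theorem isFormalCurvature_aevalDeriv_wedge (hg : g.IsSymm) {L : Module.End ℝ V}
    (hL : g.IsSelfAdjoint L) (p : ℝ[X]) :
    IsFormalCurvature fun u v => aevalDeriv L p (wedge g u v) :=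
  ⟨fun u u' v => by simp only [wedge_add_left, map_add],
    fun c u v => by simp only [wedge_smul_left, map_smul],
    fun u v v' => by simp only [wedge_add_right, map_add],
    fun c u v => by simp only [wedge_smul_right, map_smul],
    fun u => by simp only [wedge_self, map_zero],
    aevalDeriv_wedge_apply_cyclic hg hL p⟩

theorem stmt4_general (hg : g.IsSymm) {L : Module.End ℝ V} (hL : g.IsSelfAdjoint L) {p : ℝ[X]}
    (hp : aeval L p = 0) :
    IsFormalCurvature (fun u v => aevalDeriv L p (wedge g u v)) ∧
      ∀ u v, (∀ x y, g (aevalDeriv L p (wedge g u v) x) y =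
          -g x (aevalDeriv L p (wedge g u v) y)) ∧
        Commute (aevalDeriv L p (wedge g u v)) L :=
  ⟨isFormalCurvature_aevalDeriv_wedge hg hL p, fun u v =>
    ⟨(LinearMap.isSkewAdjoint_iff_neg_self_adjoint _).1 <|
      isSkewAdjoint_aevalDeriv hL (isSkewAdjoint_wedge hg u v) p,
    commute_aevalDeriv_of_aeval_eq_zero hp _⟩⟩

end Wedge

/-- If `L` is `g`-symmetric and `p` is a real polynomial with `p(L) = 0`,
then `R(u,v) = D_p(L, u ∧ v)` is a formal curvature tensor on `V` all of whose values
lie in `𝔤_L`: each `R(u,v)` is `g`-skew-symmetric and commutes with `L`. -/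
theorem stmt4 (V : Type*) [AddCommGroup V] [Module ℝ V] [FiniteDimensional ℝ V]
    (g : LinearMap.BilinForm ℝ V) (hg_symm : ∀ u v : V, g u v = g v u)
    (hg_nd : g.Nondegenerate)
    (N : ℕ) (a : ℕ → ℝ) (L : Module.End ℝ V)
    (hL : ∀ u v : V, g (L u) v = g u (L v))
    (hpL : ∑ m ∈ Finset.range (N + 1), a m • L ^ m = 0) :
    IsFormalCurvature (fun u v : V =>
        ∑ m ∈ Finset.range (N + 1), a m •
          ∑ j ∈ Finset.range m, L ^ (m - 1 - j) * wedge g u v * L ^ j) ∧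
      ∀ u v : V,
        (∀ x y : V,
          g ((∑ m ∈ Finset.range (N + 1), a m •
                ∑ j ∈ Finset.range m, L ^ (m - 1 - j) * wedge g u v * L ^ j) x) y =
          - g x ((∑ m ∈ Finset.range (N + 1), a m •
                ∑ j ∈ Finset.range m, L ^ (m - 1 - j) * wedge g u v * L ^ j) y)) ∧
        (∑ m ∈ Finset.range (N + 1), a m •
            ∑ j ∈ Finset.range m, L ^ (m - 1 - j) * wedge g u v * L ^ j) * L =
          L * (∑ m ∈ Finset.range (N + 1), a m •
            ∑ j ∈ Finset.range m, L ^ (m - 1 - j) * wedge g u v * L ^ j) := by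
  have hp : aeval L (∑ m ∈ Finset.range (N + 1), monomial m (a m)) = 0 := by
    simpa only [map_sum, aeval_monomial, ← Algebra.smul_def] using hpL
  simpa only [aevalDeriv_sum_monomial_apply, commute_iff_eq] using stmt4_general ⟨hg_symm⟩ hL hp
end

section
/- Let L be a g-symmetric endomorphism of V whose minimal polynomial has degree equal to dim V (i.e. L is a regular operator). Then 𝔤_L = {0}: every g-skew-symmetric endomorphism X of V commuting with L is zero. -/
/-!
Some vector `v` has the minimal polynomial of `L` as its annihilator, so `K[X] / (minpoly)` embeds
into `V` by `p ↦ p(L) v`. When `L` is regular the two dimensions agree, so `v` is cyclic and every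
endomorphism `T` commuting with `L` is a polynomial in `L`. Polynomials in a `g`-symmetric operator
are `g`-symmetric, and as `2 ≠ 0` and `g` is nondegenerate, only `0` is both `g`-symmetric and
`g`-skew-symmetric.
-/

open Polynomial

section

variable {K V : Type*} [Field K] [AddCommGroup V] [Module K V] [FiniteDimensional K V]

theorem exists_aeval_apply_eq_zero_iff_minpoly_dvd (L : Module.End K V) :
    ∃ v : V, ∀ p : K[X], aeval L p v = 0 ↔ minpoly K L ∣ p := by
  obtain ⟨v, hv⟩ := Module.exists_ker_toSpanSingleton_eq_annihilator K[X] (Module.AEval' L)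
  rw [← span_minpoly_eq_annihilator] at hv
  refine ⟨(Module.AEval'.of L).symm v, fun p ↦ ?_⟩
  rw [← Ideal.mem_span_singleton, ← hv, LinearMap.mem_ker, LinearMap.toSpanSingleton_apply,
    ← (Module.AEval'.of L).symm.map_eq_zero_iff, Module.AEval.of_symm_smul, Module.End.smul_def]

theorem exists_surjective_aeval_apply {L : Module.End K V}
    (hL : (minpoly K L).natDegree = Module.finrank K V) :
    ∃ v : V, Function.Surjective fun p : K[X] ↦ aeval L p v := by
  obtain ⟨v, hv⟩ := exists_aeval_apply_eq_zero_iff_minpoly_dvd L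
  let evalAt : K[X] →ₗ[K] V := LinearMap.applyₗ v ∘ₗ (aeval L).toLinearMap
  have ker_evalAt : evalAt.ker = (Ideal.span {minpoly K L}).restrictScalars K := by
    ext p
    exact (hv p).trans Ideal.mem_span_singleton.symm
  have finrank_range : Module.finrank K evalAt.range = Module.finrank K V :=
    calc Module.finrank K evalAt.range
      _ = Module.finrank K (K[X] ⧸ evalAt.ker) := evalAt.quotKerEquivRange.finrank_eq.symm
      _ = Module.finrank K (K[X] ⧸ Ideal.span {minpoly K L}) := by rw [ker_evalAt]; rfl
      _ = (minpoly K L).natDegree := finrank_quotient_span_eq_natDegree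
      _ = Module.finrank K V := hL
  exact ⟨v, LinearMap.range_eq_top.mp (Submodule.eq_top_of_finrank_eq finrank_range)⟩

end

theorem exists_aeval_eq_of_commute {R M : Type*} [CommSemiring R] [AddCommMonoid M] [Module R M]
    {L T : Module.End R M} {v : M} (hv : Function.Surjective fun p : R[X] ↦ aeval L p v)
    (hTL : Commute T L) : ∃ p : R[X], aeval L p = T := by
  obtain ⟨p, hp : aeval L p v = T v⟩ := hv (T v)
  refine ⟨p, LinearMap.ext fun w ↦ ?_⟩
  obtain ⟨q, rfl : aeval L q v = w⟩ := hv w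
  have hTq : Commute T (aeval L q) :=
    Algebra.commute_of_mem_adjoin_singleton_of_commute (aeval_mem_adjoin_singleton R L) hTL
  calc aeval L p (aeval L q v)
    _ = aeval L q (aeval L p v) := DFunLike.congr_fun ((Commute.all p q).map (aeval L)) v
    _ = aeval L q (T v) := by rw [hp]
    _ = T (aeval L q v) := (DFunLike.congr_fun hTq v).symm

theorem isSelfAdjoint_pow {R M N : Type*} [CommSemiring R] [AddCommMonoid M] [Module R M]
    [AddCommMonoid N] [Module R N] {B : M →ₗ[R] M →ₗ[R] N} {L : Module.End R M}
    (hL : B.IsSelfAdjoint L) (n : ℕ) : B.IsSelfAdjoint (L ^ n : Module.End R M) := by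
  induction n with
  | zero => exact LinearMap.isAdjointPair_one
  | succ n ih =>
    have h : B.IsAdjointPair B (L ^ n * L : Module.End R M) (L * L ^ n : Module.End R M) :=
      LinearMap.IsAdjointPair.mul ih hL
    rwa [← pow_succ, ← pow_succ'] at h

theorem isSelfAdjoint_aeval {R M N : Type*} [CommRing R] [AddCommGroup M] [Module R M]
    [AddCommGroup N] [Module R N] {B : M →ₗ[R] M →ₗ[R] N} {L : Module.End R M}
    (hL : B.IsSelfAdjoint L) (p : R[X]) : B.IsSelfAdjoint (aeval L p) := by
  rw [← LinearMap.mem_selfAdjointSubmodule, aeval_eq_sum_range]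
  exact Submodule.sum_mem _ fun n _ ↦ Submodule.smul_mem _ _ (isSelfAdjoint_pow hL n)

theorem eq_zero_of_isSelfAdjoint_of_isSkewAdjoint {R M : Type*} [CommRing R] [AddCommGroup M]
    [Module R M] (h2 : IsLeftRegular (2 : R)) {B : LinearMap.BilinForm R M} (hB : B.SeparatingLeft)
    {T : Module.End R M} (hT : B.IsSelfAdjoint T) (hT' : B.IsSkewAdjoint T) : T = 0 := by
  refine LinearMap.ext fun u ↦ hB _ fun w ↦ h2 ?_
  calc 2 * B (T u) w
    _ = B (T u) w + B (T u) w := two_mul _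
    _ = B u (T w) + B u (-T w) := congrArg₂ (· + ·) (hT u w) (hT' u w)
    _ = 2 * 0 := by rw [map_neg, add_neg_cancel, mul_zero]

theorem stmt5_general {K V : Type*} [Field K] (h2 : (2 : K) ≠ 0) [AddCommGroup V] [Module K V]
    [FiniteDimensional K V] {g : LinearMap.BilinForm K V} (hg : g.SeparatingLeft)
    {L : Module.End K V} (hL : g.IsSelfAdjoint L)
    (hreg : (minpoly K L).natDegree = Module.finrank K V)
    {T : Module.End K V} (hT : g.IsSkewAdjoint T) (hTL : Commute T L) : T = 0 := by
  obtain ⟨v, hv⟩ := exists_surjective_aeval_apply hreg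
  obtain ⟨p, rfl⟩ := exists_aeval_eq_of_commute hv hTL
  exact eq_zero_of_isSelfAdjoint_of_isSkewAdjoint (IsRegular.of_ne_zero h2).left hg
    (isSelfAdjoint_aeval hL p) hT

/-- If `L` is a `g`-symmetric endomorphism of `V` whose minimal polynomial
has degree `dim V` (i.e. `L` is regular), then `𝔤_L = {0}`: every `g`-skew-symmetric
endomorphism commuting with `L` is zero. -/
theorem stmt5 (V : Type*) [AddCommGroup V] [Module ℝ V] [FiniteDimensional ℝ V]
    (g : LinearMap.BilinForm ℝ V) (hg_symm : ∀ u v : V, g u v = g v u)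
    (hg_nd : g.Nondegenerate)
    (L : Module.End ℝ V)
    (hL : ∀ u v : V, g (L u) v = g u (L v))
    (hreg : (minpoly ℝ L).natDegree = Module.finrank ℝ V) :
    ∀ X : Module.End ℝ V,
      (∀ u v : V, g (X u) v = - g u (X v)) → X * L = L * X → X = 0 := by
  intro X hX hXL
  exact stmt5_general two_ne_zero hg_nd.1 hL hreg (fun u v ↦ by simpa using hX u v) hXL
end

section
/- Let 1 ≤ m ≤ n be integers and define the linear map Φ from m×n real matrices to m×n real matrices by Φ(X) = Σ_{j=0}^{n-1} J_m^{n-1-j} X J_n^{j}. Then the image of Φ is exactly the set of m×n matrices M such that M_{i,l} = 0 whenever l − i < n − m, and M_{i,l} = M_{i+1,l+1} whenever 1 ≤ i ≤ m−1 and 1 ≤ l ≤ n−1 (entries are constant along diagonals). In particular, the image of Φ has dimension m. -/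
/-- The `n × n` real nilpotent Jordan block: `(J n) i j = 1` if `j = i + 1`, else `0`
(0-based indices). -/
def JordanBlock (n : ℕ) : Matrix (Fin n) (Fin n) ℝ :=
  Matrix.of fun i j => if (j : ℕ) = (i : ℕ) + 1 then 1 else 0

/-- The linear map `Φ(X) = Σ_{j=0}^{n-1} J_m^{n-1-j} X J_n^j` on `m × n` real matrices. -/
noncomputable def Phi (m n : ℕ) :
    Matrix (Fin m) (Fin n) ℝ →ₗ[ℝ] Matrix (Fin m) (Fin n) ℝ where
  toFun X := ∑ j ∈ Finset.range n, JordanBlock m ^ (n - 1 - j) * X * JordanBlock n ^ j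
  map_add' X Y := by
    simp [Matrix.mul_add, Matrix.add_mul, Finset.sum_add_distrib]
  map_smul' c X := by
    simp [Matrix.mul_smul, Matrix.smul_mul, Finset.smul_sum]

/-!
Multiplying `Φ(X)` by `J_m` on the left and by `J_n` on the right gives two sums that differ only
in their end terms, so `J_m Φ(X) - Φ(X) J_n = J_m ^ n X - X J_n ^ n = 0`. Conversely, if
`J_m M = M J_n`, then `J_n e_{l+1} = e_l` forces every column of `M` to be the image under `J_m` of
the next one, so the columns are `J_m ^ (n-1-l) v` with `v` the last column; this matrix is
`Φ(v e_0ᵀ)`. Hence the image of `Φ` is the space of intertwiners of `J_n` and `J_m`, it is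
parametrized by the last column, and `J_m M = M J_n` read entrywise is the stated description.
-/

open Matrix

section Intertwining

variable {ι κ R : Type*} [Fintype ι] [DecidableEq ι] [Fintype κ] [DecidableEq κ]

theorem mul_geom_sum_sub_geom_sum_mul [Ring R] (A : Matrix ι ι R) (B : Matrix κ κ R)
    (X : Matrix ι κ R) (n : ℕ) :
    A * (∑ j ∈ Finset.range n, A ^ (n - 1 - j) * X * B ^ j) -
      (∑ j ∈ Finset.range n, A ^ (n - 1 - j) * X * B ^ j) * B = A ^ n * X - X * B ^ n := by
  have telescoping_term : ∀ j ∈ Finset.range n,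
      A * (A ^ (n - 1 - j) * X * B ^ j) - A ^ (n - 1 - j) * X * B ^ j * B =
        A ^ (n - j) * X * B ^ j - A ^ (n - (j + 1)) * X * B ^ (j + 1) := by
    intro j hj
    have exponent : n - j = n - 1 - j + 1 := by have := Finset.mem_range.1 hj; omega
    rw [exponent, pow_succ', pow_succ, Nat.sub_add_eq n j 1, Nat.sub_right_comm n j 1]
    simp only [Matrix.mul_assoc]
  rw [Matrix.mul_sum, Matrix.sum_mul, ← Finset.sum_sub_distrib,
    Finset.sum_congr rfl telescoping_term,
    Finset.sum_range_sub' fun j => A ^ (n - j) * X * B ^ j]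
  simp

/-- The Krylov matrix of `A` at `v` in reversed order, as a linear function of `v`: its columns are
`A ^ n v, …, A v, v`, so that `v` is the last one. -/
def reverseKrylov [CommSemiring R] (A : Matrix ι ι R) (n : ℕ) :
    (ι → R) →ₗ[R] Matrix ι (Fin (n + 1)) R where
  toFun v := Matrix.of fun i l => (A ^ (n - (l : ℕ)) *ᵥ v) i
  map_add' v w := by ext; simp [mulVec_add]
  map_smul' c v := by ext; simp [mulVec_smul]

theorem reverseKrylov_apply [CommSemiring R] (A : Matrix ι ι R) (n : ℕ) (v : ι → R) (i : ι)
    (l : Fin (n + 1)) : reverseKrylov A n v i l = (A ^ (n - (l : ℕ)) *ᵥ v) i :=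
  rfl

theorem reverseKrylov_injective [CommSemiring R] (A : Matrix ι ι R) (n : ℕ) :
    Function.Injective (reverseKrylov A n) := by
  intro v w hvw
  ext i
  simpa [reverseKrylov_apply] using congr_fun₂ hvw i (Fin.last n)

end Intertwining

section JordanBlock

variable {ι : Type*} {m n : ℕ}

theorem mul_jordanBlock_apply_zero (M : Matrix ι (Fin (n + 1)) ℝ) (i : ι) :
    (M * JordanBlock (n + 1)) i 0 = 0 := by
  simp [mul_apply, JordanBlock]

theorem mul_jordanBlock_apply_succ (M : Matrix ι (Fin (n + 1)) ℝ) (i : ι) (l : Fin n) :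
    (M * JordanBlock (n + 1)) i l.succ = M i l.castSucc := by
  have column_entry (k : Fin (n + 1)) :
      JordanBlock (n + 1) k l.succ = if l.castSucc = k then 1 else 0 := by
    simp [JordanBlock, Fin.ext_iff]
  simp [mul_apply, column_entry]

theorem jordanBlock_pow_apply (k : ℕ) (i j : Fin n) :
    (JordanBlock n ^ k) i j = if (j : ℕ) = i + k then 1 else 0 := by
  obtain _ | n := n
  · exact i.elim0
  induction k generalizing j with
  | zero => simp [one_apply, Fin.ext_iff, eq_comm]
  | succ k ih =>
    rw [pow_succ]
    cases j using Fin.cases with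
    | zero => simp [mul_jordanBlock_apply_zero]
    | succ j => simp [mul_jordanBlock_apply_succ, ih, ← add_assoc]

theorem jordanBlock_pow_eq_zero (hmn : m ≤ n) : JordanBlock m ^ n = 0 := by
  ext i j
  rw [jordanBlock_pow_apply, if_neg (by omega), Matrix.zero_apply]

theorem jordanBlock_pow_mulVec_apply (k : ℕ) (v : Fin n → ℝ) (i : Fin n) :
    (JordanBlock n ^ k *ᵥ v) i = if h : (i : ℕ) + k < n then v ⟨i + k, h⟩ else 0 := by
  simp only [mulVec, dotProduct, jordanBlock_pow_apply, ite_mul, one_mul, zero_mul]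
  split_ifs with h
  · simpa [Fin.ext_iff] using Finset.sum_ite_eq' Finset.univ (⟨i + k, h⟩ : Fin n) v
  · exact Finset.sum_eq_zero fun j _ => if_neg (by omega)

theorem jordanBlock_mul_apply (M : Matrix (Fin m) ι ℝ) (i : Fin m) (l : ι) :
    (JordanBlock m * M) i l = if h : (i : ℕ) + 1 < m then M ⟨i + 1, h⟩ l else 0 := by
  have mulVec_col := jordanBlock_pow_mulVec_apply 1 (M.col l) i
  rwa [pow_one] at mulVec_col

theorem eq_reverseKrylov_of_mul_eq_mul_jordanBlock [Fintype ι] [DecidableEq ι]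
    {A : Matrix ι ι ℝ} {M : Matrix ι (Fin (n + 1)) ℝ} (hM : A * M = M * JordanBlock (n + 1)) :
    M = reverseKrylov A n (M.col (Fin.last n)) := by
  have col_castSucc (l : Fin n) : M.col l.castSucc = A *ᵥ M.col l.succ := by
    ext i
    calc M i l.castSucc = (M * JordanBlock (n + 1)) i l.succ :=
          (mul_jordanBlock_apply_succ M i l).symm
      _ = (A * M) i l.succ := by rw [hM]
  suffices col_eq : ∀ l, M.col l = A ^ (n - (l : ℕ)) *ᵥ M.col (Fin.last n) by
    ext i l
    exact congr_fun (col_eq l) i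
  intro l
  induction l using Fin.reverseInduction with
  | last => simp
  | cast l ih =>
    have exponent : n - (l : ℕ) = n - (l + 1) + 1 := by omega
    rw [col_castSucc, ih, mulVec_mulVec, ← pow_succ', Fin.val_succ, Fin.val_castSucc, exponent]

theorem jordanBlock_mul_eq_mul_jordanBlock_iff (hmn : m ≤ n) (M : Matrix (Fin m) (Fin n) ℝ) :
    JordanBlock m * M = M * JordanBlock n ↔
      (∀ (i : Fin m) (l : Fin n), (l : ℤ) - (i : ℤ) < (n : ℤ) - (m : ℤ) → M i l = 0) ∧
      (∀ (i : Fin m) (l : Fin n) (hi : (i : ℕ) + 1 < m) (hl : (l : ℕ) + 1 < n),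
        M i l = M ⟨(i : ℕ) + 1, hi⟩ ⟨(l : ℕ) + 1, hl⟩) := by
  obtain _ | n := n
  · exact iff_of_true (Matrix.ext fun _ l => l.elim0) ⟨fun _ l => l.elim0, fun _ l => l.elim0⟩
  constructor
  · refine fun hM => ⟨fun i l hil => ?_, fun i l hi hl => ?_⟩
    · rw [eq_reverseKrylov_of_mul_eq_mul_jordanBlock hM, reverseKrylov_apply,
        jordanBlock_pow_mulVec_apply, dif_neg (by omega)]
    · have entry := congr_fun₂ hM i (Fin.succ ⟨l, by omega⟩)
      rw [jordanBlock_mul_apply, dif_pos hi, mul_jordanBlock_apply_succ] at entry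
      exact entry.symm
  · rintro ⟨eq_zero, diag_const⟩
    ext i l
    rw [jordanBlock_mul_apply]
    cases l using Fin.cases with
    | zero =>
      rw [mul_jordanBlock_apply_zero]
      split_ifs with hi
      · exact eq_zero _ _ (by simp only [Fin.val_zero]; omega)
      · rfl
    | succ l =>
      rw [mul_jordanBlock_apply_succ]
      split_ifs with hi
      · exact (diag_const i l.castSucc hi (by simp)).symm
      · exact (eq_zero i l.castSucc (by simp only [Fin.val_castSucc]; omega)).symm

end JordanBlock

section Phi

variable {m n : ℕ}

theorem Phi_apply (X : Matrix (Fin m) (Fin n) ℝ) :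
    Phi m n X = ∑ j ∈ Finset.range n, JordanBlock m ^ (n - 1 - j) * X * JordanBlock n ^ j :=
  rfl

theorem jordanBlock_mul_Phi (hmn : m ≤ n) (X : Matrix (Fin m) (Fin n) ℝ) :
    JordanBlock m * Phi m n X = Phi m n X * JordanBlock n := by
  rw [← sub_eq_zero, Phi_apply, mul_geom_sum_sub_geom_sum_mul, jordanBlock_pow_eq_zero hmn,
    jordanBlock_pow_eq_zero le_rfl, Matrix.zero_mul, Matrix.mul_zero, sub_zero]

theorem Phi_vecMulVec_single_zero (v : Fin m → ℝ) :
    Phi m (n + 1) (vecMulVec v (Pi.single 0 1)) = reverseKrylov (JordanBlock m) n v := by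
  ext i l
  have first_row (j : ℕ) : (JordanBlock (n + 1) ^ j) 0 l = if (l : ℕ) = j then 1 else 0 := by
    simp [jordanBlock_pow_apply]
  simp [Phi_apply, Matrix.sum_apply, mul_vecMulVec, vecMulVec_mul, vecMulVec_apply, first_row,
    reverseKrylov_apply, l.is_le.not_gt]

theorem mem_range_Phi_iff (hmn : m ≤ n) {M : Matrix (Fin m) (Fin n) ℝ} :
    M ∈ LinearMap.range (Phi m n) ↔ JordanBlock m * M = M * JordanBlock n := by
  refine ⟨?_, fun hM => ?_⟩
  · rintro ⟨X, rfl⟩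
    exact jordanBlock_mul_Phi hmn X
  · obtain _ | n := n
    · exact ⟨0, Matrix.ext fun _ l => l.elim0⟩
    · exact ⟨_, (Phi_vecMulVec_single_zero _).trans
        (eq_reverseKrylov_of_mul_eq_mul_jordanBlock hM).symm⟩

theorem range_Phi_eq_range_reverseKrylov (hmn : m ≤ n + 1) :
    LinearMap.range (Phi m (n + 1)) = LinearMap.range (reverseKrylov (JordanBlock m) n) := by
  apply le_antisymm
  · intro M hM
    exact ⟨_, (eq_reverseKrylov_of_mul_eq_mul_jordanBlock ((mem_range_Phi_iff hmn).1 hM)).symm⟩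
  · rintro _ ⟨v, rfl⟩
    exact ⟨_, Phi_vecMulVec_single_zero v⟩

theorem finrank_range_Phi (hmn : m ≤ n) : Module.finrank ℝ (LinearMap.range (Phi m n)) = m := by
  obtain _ | n := n
  · obtain rfl := Nat.le_zero.1 hmn
    exact Module.finrank_zero_of_subsingleton
  · rw [range_Phi_eq_range_reverseKrylov hmn,
      LinearMap.finrank_range_of_inj (reverseKrylov_injective _ n), Module.finrank_fin_fun]

end Phi

/-- For `1 ≤ m ≤ n`, the image of `Φ` is exactly the set of `m × n`
matrices `M` with `M i l = 0` whenever `l - i < n - m`, and whose entries are constant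
along diagonals; in particular the image of `Φ` has dimension `m`. -/
theorem stmt6 (m n : ℕ) (hm : 1 ≤ m) (hmn : m ≤ n) :
    (LinearMap.range (Phi m n) : Set (Matrix (Fin m) (Fin n) ℝ)) =
      {M | (∀ (i : Fin m) (l : Fin n), (l : ℤ) - (i : ℤ) < (n : ℤ) - (m : ℤ) → M i l = 0) ∧
           (∀ (i : Fin m) (l : Fin n) (hi : (i : ℕ) + 1 < m) (hl : (l : ℕ) + 1 < n),
              M i l = M ⟨(i : ℕ) + 1, hi⟩ ⟨(l : ℕ) + 1, hl⟩)} ∧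
    Module.finrank ℝ (LinearMap.range (Phi m n)) = m := by
  refine ⟨Set.ext fun M => ?_, finrank_range_Phi hmn⟩
  exact (mem_range_Phi_iff hmn).trans (jordanBlock_mul_eq_mul_jordanBlock_iff hmn M)
end

section
/- Let n₁ ≤ n₂ ≤ ... ≤ n_k be positive integers, let ε₁, ..., ε_k ∈ {1, −1}, let V = ℝ^{n₁+...+n_k}, let L be the block-diagonal matrix diag(J_{n₁}, ..., J_{n_k}), and let g be the nondegenerate symmetric bilinear form with matrix diag(ε₁S_{n₁}, ..., ε_k S_{n_k}). Then the vector space 𝔤_L = {X : X g-skew-symmetric, XL = LX} has dimension Σ_{i=1}^{k} (k − i)·n_i. -/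
open Matrix

/-!
Multiplication by `G` turns `𝔤_L` into the space of skew-symmetric `Y` with `Lᵀ Y = Y L`, because
`G` is symmetric, invertible and `Lᵀ G = G L`. The equation `Lᵀ Y = Y L` can be read block by block:
it says that the block `Yᵢⱼ` is a Hankel matrix whose entries vanish above the antidiagonal line
`a + b + 1 = max nᵢ nⱼ`, so it has `min nᵢ nⱼ` free coefficients. Square Hankel matrices are
symmetric, so skew-symmetry kills the diagonal blocks and determines the blocks below the diagonal
by those above it. Hence `dim 𝔤_L = ∑_{i < j} min nᵢ nⱼ`.
-/

section Intertwiners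

variable {R m n : Type*} [CommRing R] [Fintype m] [Fintype n]

/-- The matrices intertwining `C` with `A`; for `A = C` this is the commutant of `A`. -/
def intertwiners (A : Matrix m m R) (C : Matrix n n R) : Submodule R (Matrix m n R) where
  carrier := {B | A * B = B * C}
  add_mem' {B B'} hB hB' := by
    simp only [Set.mem_ofPred_eq] at hB hB' ⊢
    rw [Matrix.mul_add, Matrix.add_mul, hB, hB']
  zero_mem' := by simp
  smul_mem' c B hB := by
    simp only [Set.mem_ofPred_eq] at hB ⊢
    rw [Matrix.mul_smul, Matrix.smul_mul, hB]

theorem mem_intertwiners {A : Matrix m m R} {C : Matrix n n R} {B : Matrix m n R} :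
    B ∈ intertwiners A C ↔ A * B = B * C :=
  Iff.rfl

theorem transpose_mem_intertwiners {A : Matrix m m R} {C : Matrix n n R} {B : Matrix m n R}
    (hB : B ∈ intertwiners Aᵀ C) : Bᵀ ∈ intertwiners Cᵀ A := by
  rw [mem_intertwiners] at hB ⊢
  rw [← transpose_mul, ← hB, transpose_mul, transpose_transpose]

/-- The commutant of `L` among the endomorphisms that are skew for the bilinear form with Gram
matrix `G`, i.e. the space `𝔤_L`. -/
def skewCommutant [DecidableEq n] (G L : Matrix n n R) : Submodule R (Matrix n n R) :=
  skewAdjointMatricesSubmodule G ⊓ intertwiners L L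

theorem mem_skewCommutant [DecidableEq n] {G L X : Matrix n n R} :
    X ∈ skewCommutant G L ↔ Xᵀ * G = -(G * X) ∧ L * X = X * L := by
  rw [skewCommutant, Submodule.mem_inf, mem_skewAdjointMatricesSubmodule, Matrix.IsSkewAdjoint,
    Matrix.IsAdjointPair, Matrix.mul_neg, mem_intertwiners]

theorem isSkewAdjoint_iff_forall_dotProduct {G X : Matrix n n R} :
    G.IsSkewAdjoint X ↔ ∀ u v, (X *ᵥ u) ⬝ᵥ (G *ᵥ v) = -u ⬝ᵥ (G *ᵥ (X *ᵥ v)) := by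
  classical
  rw [Matrix.IsSkewAdjoint, ← isAdjointPair_toLinearMap₂', LinearMap.IsAdjointPair]
  simp only [toLinearMap₂'_apply', toLin'_apply, neg_mulVec, mulVec_neg, dotProduct_neg,
    neg_dotProduct]

theorem setOf_skew_and_commute_eq_skewCommutant [DecidableEq n] (G L : Matrix n n R) :
    {X | (∀ u v, (X *ᵥ u) ⬝ᵥ (G *ᵥ v) = -u ⬝ᵥ (G *ᵥ (X *ᵥ v))) ∧ X * L = L * X} =
      (skewCommutant G L : Set (Matrix n n R)) := by
  ext X
  rw [Set.mem_ofPred_eq, ← isSkewAdjoint_iff_forall_dotProduct, SetLike.mem_coe, skewCommutant,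
    Submodule.mem_inf, mem_skewAdjointMatricesSubmodule, mem_intertwiners, eq_comm (a := X * L)]

/-- The skew-symmetric matrices `Y` with `Aᵀ Y = Y A`. -/
def skewIntertwiners (A : Matrix n n R) : Submodule R (Matrix n n R) where
  carrier := {Y | Yᵀ = -Y ∧ Y ∈ intertwiners Aᵀ A}
  add_mem' {Y Y'} hY hY' :=
    ⟨by rw [transpose_add, hY.1, hY'.1, neg_add], add_mem hY.2 hY'.2⟩
  zero_mem' := ⟨by simp, zero_mem _⟩
  smul_mem' c Y hY := ⟨by rw [transpose_smul, hY.1, smul_neg], Submodule.smul_mem _ c hY.2⟩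

theorem mem_skewIntertwiners {A Y : Matrix n n R} :
    Y ∈ skewIntertwiners A ↔ Yᵀ = -Y ∧ Aᵀ * Y = Y * A :=
  Iff.rfl

theorem comap_mulLeft_skewIntertwiners [DecidableEq n] {L : Matrix n n R} (G : (Matrix n n R)ˣ)
    (hG : (G : Matrix n n R)ᵀ = G) (hGL : (G : Matrix n n R) ∈ intertwiners Lᵀ L) :
    (skewIntertwiners L).comap (G.mulLeftLinearEquiv R (Matrix n n R) : _ →ₗ[R] _) =
      skewCommutant (G : Matrix n n R) L := by
  ext X
  have commute_iff : Lᵀ * (G * X) = G * X * L ↔ L * X = X * L := by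
    rw [← Matrix.mul_assoc, mem_intertwiners.mp hGL, Matrix.mul_assoc, Matrix.mul_assoc]
    exact G.isUnit.mul_right_inj
  rw [Submodule.mem_comap, LinearEquiv.coe_coe, Units.mulLeftLinearEquiv_apply,
    mem_skewIntertwiners, mem_skewCommutant, commute_iff, transpose_mul, hG]

/-- Left multiplication by the Gram matrix `G`, which sends the endomorphism `X` to the bilinear
form `g(·, X ·)`. -/
def skewCommutantEquiv [DecidableEq n] {L : Matrix n n R} (G : (Matrix n n R)ˣ)
    (hG : (G : Matrix n n R)ᵀ = G) (hGL : (G : Matrix n n R) ∈ intertwiners Lᵀ L) :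
    skewCommutant (G : Matrix n n R) L ≃ₗ[R] skewIntertwiners L :=
  (LinearEquiv.ofEq _ _ (comap_mulLeft_skewIntertwiners G hG hGL).symm).trans
    ((G.mulLeftLinearEquiv R (Matrix n n R)).ofSubmodule' (skewIntertwiners L))

end Intertwiners

section Blocks

variable {R ι : Type*} {d : ι → Type*}

/-- The block of `Y` in block row `i` and block column `j`. -/
def sigmaBlock (Y : Matrix (Σ i, d i) (Σ i, d i) R) (i j : ι) : Matrix (d i) (d j) R :=
  Y.submatrix (Sigma.mk i) (Sigma.mk j)

theorem eq_iff_sigmaBlock_eq {Y Z : Matrix (Σ i, d i) (Σ i, d i) R} :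
    Y = Z ↔ ∀ i j, sigmaBlock Y i j = sigmaBlock Z i j := by
  refine ⟨fun h _ _ => h ▸ rfl, fun h => ?_⟩
  ext ⟨i, a⟩ ⟨j, b⟩
  exact congrFun₂ (h i j) a b

variable [CommRing R]

theorem eq_zero_of_transpose_eq_self_of_transpose_eq_neg {n : Type*}
    (two_regular : (2 : R) ∈ nonZeroDivisors R) {B : Matrix n n R} (hsymm : Bᵀ = B)
    (hskew : Bᵀ = -B) : B = 0 := by
  ext a b
  have h : B a b = -B a b := congrFun₂ (hsymm.symm.trans hskew) a b
  refine (mul_left_mem_nonZeroDivisors_eq_zero_iff two_regular).mp ?_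
  rw [two_mul, ← eq_neg_iff_add_eq_zero, ← h]

section UpperBlocks

variable [LinearOrder ι]

/-- The skew-symmetric block matrix with zero diagonal blocks and prescribed blocks above the
diagonal. -/
def skewOfUpperBlocks (B : ∀ p : {p : ι × ι // p.1 < p.2}, Matrix (d p.1.1) (d p.1.2) R) :
    Matrix (Σ i, d i) (Σ i, d i) R :=
  of fun p q =>
    if h : p.1 < q.1 then B ⟨(p.1, q.1), h⟩ p.2 q.2
    else if h : q.1 < p.1 then -B ⟨(q.1, p.1), h⟩ q.2 p.2
    else 0

theorem sigmaBlock_skewOfUpperBlocks_of_lt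
    (B : ∀ p : {p : ι × ι // p.1 < p.2}, Matrix (d p.1.1) (d p.1.2) R) {i j : ι} (h : i < j) :
    sigmaBlock (skewOfUpperBlocks B) i j = B ⟨(i, j), h⟩ := by
  ext a b
  simp [sigmaBlock, skewOfUpperBlocks, h]

theorem sigmaBlock_skewOfUpperBlocks_of_gt
    (B : ∀ p : {p : ι × ι // p.1 < p.2}, Matrix (d p.1.1) (d p.1.2) R) {i j : ι} (h : j < i) :
    sigmaBlock (skewOfUpperBlocks B) i j = -(B ⟨(j, i), h⟩)ᵀ := by
  ext a b
  simp [sigmaBlock, skewOfUpperBlocks, h, h.not_gt]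

theorem sigmaBlock_skewOfUpperBlocks_self
    (B : ∀ p : {p : ι × ι // p.1 < p.2}, Matrix (d p.1.1) (d p.1.2) R) (i : ι) :
    sigmaBlock (skewOfUpperBlocks B) i i = 0 := by
  ext a b
  simp [sigmaBlock, skewOfUpperBlocks]

end UpperBlocks

variable [Fintype ι] [∀ i, Fintype (d i)]

theorem sigmaBlock_mul_blockDiagonal' [DecidableEq ι] (Y : Matrix (Σ i, d i) (Σ i, d i) R)
    (A : ∀ i, Matrix (d i) (d i) R) (i j : ι) :
    sigmaBlock (Y * blockDiagonal' A) i j = sigmaBlock Y i j * A j := by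
  ext a b
  simp only [sigmaBlock, submatrix_apply, mul_apply, Fintype.sum_sigma]
  rw [Fintype.sum_eq_single j fun l hl => by simp [blockDiagonal'_apply_ne _ _ _ hl]]
  simp only [blockDiagonal'_apply_eq]

theorem sigmaBlock_blockDiagonal'_mul [DecidableEq ι] (Y : Matrix (Σ i, d i) (Σ i, d i) R)
    (A : ∀ i, Matrix (d i) (d i) R) (i j : ι) :
    sigmaBlock (blockDiagonal' A * Y) i j = A i * sigmaBlock Y i j := by
  ext a b
  simp only [sigmaBlock, submatrix_apply, mul_apply, Fintype.sum_sigma]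
  rw [Fintype.sum_eq_single i fun l hl => by simp [blockDiagonal'_apply_ne _ _ _ hl.symm]]
  simp only [blockDiagonal'_apply_eq]

theorem mem_skewIntertwiners_blockDiagonal' [DecidableEq ι] {A : ∀ i, Matrix (d i) (d i) R}
    {Y : Matrix (Σ i, d i) (Σ i, d i) R} :
    Y ∈ skewIntertwiners (blockDiagonal' A) ↔
      (∀ i j, (sigmaBlock Y j i)ᵀ = -sigmaBlock Y i j) ∧
        ∀ i j, sigmaBlock Y i j ∈ intertwiners (A i)ᵀ (A j) := by
  rw [mem_skewIntertwiners, blockDiagonal'_transpose, eq_iff_sigmaBlock_eq,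
    eq_iff_sigmaBlock_eq (Y := _ * _)]
  simp only [sigmaBlock_mul_blockDiagonal', sigmaBlock_blockDiagonal'_mul, mem_intertwiners]
  rfl

variable [LinearOrder ι]

theorem skewOfUpperBlocks_mem_skewIntertwiners {A : ∀ i, Matrix (d i) (d i) R}
    (B : ∀ p : {p : ι × ι // p.1 < p.2}, intertwiners (A p.1.1)ᵀ (A p.1.2)) :
    skewOfUpperBlocks (fun p => (B p : Matrix _ _ R)) ∈ skewIntertwiners (blockDiagonal' A) := by
  refine mem_skewIntertwiners_blockDiagonal'.mpr ⟨fun i j => ?_, fun i j => ?_⟩ <;>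
    rcases lt_trichotomy i j with h | rfl | h
  · rw [sigmaBlock_skewOfUpperBlocks_of_lt _ h, sigmaBlock_skewOfUpperBlocks_of_gt _ h,
      transpose_neg, transpose_transpose]
  · rw [sigmaBlock_skewOfUpperBlocks_self, transpose_zero, neg_zero]
  · rw [sigmaBlock_skewOfUpperBlocks_of_lt _ h, sigmaBlock_skewOfUpperBlocks_of_gt _ h, neg_neg]
  · rw [sigmaBlock_skewOfUpperBlocks_of_lt _ h]
    exact (B ⟨(i, j), h⟩).2
  · rw [sigmaBlock_skewOfUpperBlocks_self]
    exact zero_mem _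
  · rw [sigmaBlock_skewOfUpperBlocks_of_gt _ h]
    exact neg_mem (transpose_mem_intertwiners (B ⟨(j, i), h⟩).2)

theorem skewOfUpperBlocks_sigmaBlock (two_regular : (2 : R) ∈ nonZeroDivisors R)
    {A : ∀ i, Matrix (d i) (d i) R}
    (hsymm : ∀ i, ∀ B ∈ intertwiners (A i)ᵀ (A i), Bᵀ = B)
    {Y : Matrix (Σ i, d i) (Σ i, d i) R} (hY : Y ∈ skewIntertwiners (blockDiagonal' A)) :
    skewOfUpperBlocks (fun p => sigmaBlock Y p.1.1 p.1.2) = Y := by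
  obtain ⟨skew, intertwine⟩ := mem_skewIntertwiners_blockDiagonal'.mp hY
  refine eq_iff_sigmaBlock_eq.mpr fun i j => ?_
  rcases lt_trichotomy i j with h | rfl | h
  · rw [sigmaBlock_skewOfUpperBlocks_of_lt _ h]
  · rw [sigmaBlock_skewOfUpperBlocks_self, eq_zero_of_transpose_eq_self_of_transpose_eq_neg
      two_regular (hsymm i _ (intertwine i i)) (skew i i)]
  · rw [sigmaBlock_skewOfUpperBlocks_of_gt _ h, skew, neg_neg]

/-- A skew intertwiner of a block diagonal matrix is freely determined by its blocks above the
diagonal, provided that the intertwiners on the diagonal are all symmetric. -/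
def skewIntertwinersEquivUpperBlocks (two_regular : (2 : R) ∈ nonZeroDivisors R)
    {A : ∀ i, Matrix (d i) (d i) R}
    (hsymm : ∀ i, ∀ B ∈ intertwiners (A i)ᵀ (A i), Bᵀ = B) :
    skewIntertwiners (blockDiagonal' A) ≃ₗ[R]
      ∀ p : {p : ι × ι // p.1 < p.2}, intertwiners (A p.1.1)ᵀ (A p.1.2) where
  toFun Y p := ⟨sigmaBlock Y p.1.1 p.1.2, (mem_skewIntertwiners_blockDiagonal'.mp Y.2).2 _ _⟩
  invFun B := ⟨skewOfUpperBlocks fun p => B p, skewOfUpperBlocks_mem_skewIntertwiners B⟩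
  map_add' _ _ := rfl
  map_smul' _ _ := rfl
  left_inv Y := Subtype.ext (skewOfUpperBlocks_sigmaBlock two_regular hsymm Y.2)
  right_inv B :=
    funext fun p => Subtype.ext (sigmaBlock_skewOfUpperBlocks_of_lt (fun q => (B q).1) p.2)

end Blocks

section Jordan

variable {R : Type*} [CommRing R] {m n : ℕ}

/-- The nilpotent Jordan block `J_n`, with ones on the superdiagonal. -/
def nilpotentJordanBlock (R : Type*) [CommRing R] (n : ℕ) : Matrix (Fin n) (Fin n) R :=
  of fun a b => if (b : ℕ) = a + 1 then 1 else 0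

theorem mul_nilpotentJordanBlock_apply_zero (B : Matrix (Fin m) (Fin n) R) (a : Fin m)
    (hn : 0 < n) : (B * nilpotentJordanBlock R n) a ⟨0, hn⟩ = 0 := by
  simp [mul_apply, nilpotentJordanBlock]

theorem mul_nilpotentJordanBlock_apply_succ (B : Matrix (Fin m) (Fin n) R) (a : Fin m) {b : ℕ}
    (hb : b + 1 < n) :
    (B * nilpotentJordanBlock R n) a ⟨b + 1, hb⟩ = B a ⟨b, by lia⟩ := by
  rw [mul_apply, Fintype.sum_eq_single ⟨b, by lia⟩]
  · simp [nilpotentJordanBlock]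
  · intro c hc
    have : b ≠ c := fun h => hc (Fin.ext h.symm)
    simp [nilpotentJordanBlock, this]

theorem transpose_nilpotentJordanBlock_mul_apply (B : Matrix (Fin m) (Fin n) R) (a : Fin m)
    (b : Fin n) :
    ((nilpotentJordanBlock R m)ᵀ * B) a b = (Bᵀ * nilpotentJordanBlock R m) b a := by
  rw [← transpose_transpose B, ← transpose_mul, transpose_transpose, transpose_apply]

/-- The Hankel matrices (constant along antidiagonals) that vanish above the later of the two
antidiagonals through the top right and the bottom left corner. -/
def IsTruncatedHankel (B : Matrix (Fin m) (Fin n) R) : Prop :=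
  (∀ (a a' : Fin m) (b b' : Fin n), (a : ℕ) + b = a' + b' → B a b = B a' b') ∧
    ∀ (a : Fin m) (b : Fin n), (a : ℕ) + b + 1 < max m n → B a b = 0

theorem IsTruncatedHankel.transpose_eq_self {B : Matrix (Fin n) (Fin n) R}
    (hB : IsTruncatedHankel B) : Bᵀ = B := by
  ext a b
  exact hB.1 b a a b (add_comm _ _)

theorem IsTruncatedHankel.mem_jordanIntertwiners {B : Matrix (Fin m) (Fin n) R}
    (hB : IsTruncatedHankel B) :
    B ∈ intertwiners (nilpotentJordanBlock R m)ᵀ (nilpotentJordanBlock R n) := by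
  obtain ⟨hankel, vanish⟩ := hB
  rw [mem_intertwiners]
  ext ⟨a, ha⟩ ⟨b, hb⟩
  rw [transpose_nilpotentJordanBlock_mul_apply]
  rcases a with _ | a <;> rcases b with _ | b
  · rw [mul_nilpotentJordanBlock_apply_zero, mul_nilpotentJordanBlock_apply_zero]
  · rw [mul_nilpotentJordanBlock_apply_zero, mul_nilpotentJordanBlock_apply_succ,
      vanish _ _ (by simp only; lia)]
  · rw [mul_nilpotentJordanBlock_apply_zero, mul_nilpotentJordanBlock_apply_succ, transpose_apply,
      vanish _ _ (by simp only; lia)]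
  · rw [mul_nilpotentJordanBlock_apply_succ, mul_nilpotentJordanBlock_apply_succ, transpose_apply]
    exact hankel _ _ _ _ (by simp only; lia)

theorem apply_add_left_eq_apply_add_right_of_mem_intertwiners {B : Matrix (Fin m) (Fin n) R}
    (hB : B ∈ intertwiners (nilpotentJordanBlock R m)ᵀ (nilpotentJordanBlock R n))
    {a b : ℕ} (s : ℕ) (ha : a + s < m) (hb : b + s < n) :
    B ⟨a + s, ha⟩ ⟨b, by lia⟩ = B ⟨a, by lia⟩ ⟨b + s, hb⟩ := by
  induction s generalizing b with
  | zero => rfl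
  | succ s ih =>
    have slide := congrFun₂ hB ⟨a + s + 1, ha⟩ ⟨b + 1, by lia⟩
    rw [transpose_nilpotentJordanBlock_mul_apply, mul_nilpotentJordanBlock_apply_succ,
      mul_nilpotentJordanBlock_apply_succ, transpose_apply] at slide
    calc B ⟨a + (s + 1), ha⟩ ⟨b, by lia⟩
        = B ⟨a + s, by lia⟩ ⟨b + 1, by lia⟩ := slide.symm
      _ = B ⟨a, by lia⟩ ⟨b + 1 + s, by lia⟩ := ih _ _
      _ = B ⟨a, by lia⟩ ⟨b + (s + 1), hb⟩ := by simp only [add_assoc, add_comm 1]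

theorem apply_zero_left_eq_zero_of_mem_intertwiners {B : Matrix (Fin m) (Fin n) R}
    (hB : B ∈ intertwiners (nilpotentJordanBlock R m)ᵀ (nilpotentJordanBlock R n))
    {b : ℕ} (hm : 0 < m) (hb : b + 1 < n) : B ⟨0, hm⟩ ⟨b, by lia⟩ = 0 := by
  have h := congrFun₂ hB ⟨0, hm⟩ ⟨b + 1, hb⟩
  rw [transpose_nilpotentJordanBlock_mul_apply, mul_nilpotentJordanBlock_apply_zero,
    mul_nilpotentJordanBlock_apply_succ] at h
  exact h.symm

theorem apply_eq_zero_of_mem_intertwiners_of_add_lt {B : Matrix (Fin m) (Fin n) R}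
    (hB : B ∈ intertwiners (nilpotentJordanBlock R m)ᵀ (nilpotentJordanBlock R n))
    (a : Fin m) (b : Fin n) (h : (a : ℕ) + b + 1 < n) : B a b = 0 := by
  have slide := apply_add_left_eq_apply_add_right_of_mem_intertwiners hB (a := 0) (b := b) a
    (by lia) (by lia)
  simp only [zero_add] at slide
  rw [slide, apply_zero_left_eq_zero_of_mem_intertwiners hB _ (by lia)]

theorem isTruncatedHankel_of_mem_intertwiners {B : Matrix (Fin m) (Fin n) R}
    (hB : B ∈ intertwiners (nilpotentJordanBlock R m)ᵀ (nilpotentJordanBlock R n)) :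
    IsTruncatedHankel B := by
  have hankel (a a' : Fin m) (b b' : Fin n) (hle : a ≤ a') (h : (a : ℕ) + b = a' + b') :
      B a' b' = B a b := by
    obtain ⟨s, hs⟩ := Nat.exists_eq_add_of_le (Fin.le_def.mp hle)
    have hs' : (b : ℕ) = b' + s := by lia
    convert apply_add_left_eq_apply_add_right_of_mem_intertwiners hB (a := a) (b := b') s
      (by lia) (by lia)
  refine ⟨fun a a' b b' h => ?_, fun a b h => ?_⟩
  · rcases le_total a a' with hle | hle
    · exact (hankel a a' b b' hle h).symm
    · exact hankel a' a b' b hle h.symm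
  · rcases lt_max_iff.mp h with h | h
    · exact apply_eq_zero_of_mem_intertwiners_of_add_lt (transpose_mem_intertwiners hB) b a (by lia)
    · exact apply_eq_zero_of_mem_intertwiners_of_add_lt hB a b h

/-- The truncated Hankel matrix whose entries on the antidiagonal `a + b + 1 = max m n + t` are
`c t`. -/
def hankelOfCoeffs (c : Fin (min m n) → R) : Matrix (Fin m) (Fin n) R :=
  of fun a b => if h : max m n ≤ a + b + 1 then c ⟨a + b + 1 - max m n, by lia⟩ else 0

theorem isTruncatedHankel_hankelOfCoeffs (c : Fin (min m n) → R) :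
    IsTruncatedHankel (hankelOfCoeffs c) := by
  refine ⟨fun a a' b b' h => ?_, fun a b h => ?_⟩
  · simp only [hankelOfCoeffs, of_apply, h]
  · simp only [hankelOfCoeffs, of_apply, dif_neg h.not_ge]

/-- The coefficients of a truncated Hankel matrix, read off along its last row. -/
def hankelCoeffs (B : Matrix (Fin m) (Fin n) R) (t : Fin (min m n)) : R :=
  B ⟨m - 1, by have := t.isLt; lia⟩ ⟨max m n + t - m, by have := t.isLt; lia⟩

theorem hankelCoeffs_hankelOfCoeffs (c : Fin (min m n) → R) :
    hankelCoeffs (hankelOfCoeffs c) = c := by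
  ext t
  have ht : m - 1 + (max m n + t - m) + 1 = max m n + t := by lia
  simp only [hankelCoeffs, hankelOfCoeffs, of_apply, ht, le_add_iff_nonneg_right, zero_le, dif_pos,
    add_tsub_cancel_left]

theorem hankelOfCoeffs_hankelCoeffs {B : Matrix (Fin m) (Fin n) R} (hB : IsTruncatedHankel B) :
    hankelOfCoeffs (hankelCoeffs B) = B := by
  ext a b
  by_cases h : max m n ≤ a + b + 1
  · simp only [hankelOfCoeffs, hankelCoeffs, of_apply, dif_pos h]
    exact hB.1 _ _ _ _ (by simp only; lia)
  · simp only [hankelOfCoeffs, of_apply, dif_neg h]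
    exact (hB.2 a b (not_le.mp h)).symm

/-- Intertwiners between Jordan blocks correspond to the coefficients of truncated Hankel
matrices. -/
def intertwinersEquivCoeffs (R : Type*) [CommRing R] (m n : ℕ) :
    intertwiners (nilpotentJordanBlock R m)ᵀ (nilpotentJordanBlock R n) ≃ₗ[R]
      (Fin (min m n) → R) where
  toFun B := hankelCoeffs B
  invFun c := ⟨hankelOfCoeffs c, (isTruncatedHankel_hankelOfCoeffs c).mem_jordanIntertwiners⟩
  map_add' _ _ := rfl
  map_smul' _ _ := rfl
  left_inv B :=
    Subtype.ext (hankelOfCoeffs_hankelCoeffs (isTruncatedHankel_of_mem_intertwiners B.2))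
  right_inv := hankelCoeffs_hankelOfCoeffs

/-- The matrix `S_n` with ones on the antidiagonal. -/
def exchangeMatrix (R : Type*) [CommRing R] (n : ℕ) : Matrix (Fin n) (Fin n) R :=
  of fun a b => if (a : ℕ) + b + 1 = n then 1 else 0

theorem isTruncatedHankel_exchangeMatrix : IsTruncatedHankel (exchangeMatrix R n) := by
  refine ⟨fun a a' b b' h => ?_, fun a b h => ?_⟩
  · simp only [exchangeMatrix, of_apply, h]
  · rw [max_self] at h
    simp only [exchangeMatrix, of_apply, if_neg h.ne]

theorem exchangeMatrix_eq_permMatrix : exchangeMatrix R n = Fin.revPerm.permMatrix R := by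
  ext a b
  have h : (a : ℕ) + b + 1 = n ↔ Fin.rev a = b := by
    rw [Fin.ext_iff, Fin.val_rev]
    lia
  simp [exchangeMatrix, Equiv.Perm.permMatrix, PEquiv.toMatrix_apply, h]

theorem exchangeMatrix_mul_self : exchangeMatrix R n * exchangeMatrix R n = 1 := by
  have rev_mul_rev : (Fin.revPerm : Equiv.Perm (Fin n)) * Fin.revPerm = 1 :=
    Equiv.ext Fin.rev_rev
  rw [exchangeMatrix_eq_permMatrix, ← permMatrix_mul, rev_mul_rev, permMatrix_one]

end Jordan

section JordanBlocks

variable {R ι : Type*} [CommRing R] [Fintype ι]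

section Gram

variable [DecidableEq ι]

theorem blockDiagonal'_smul_exchangeMatrix_mul {n : ι → ℕ} {ε δ : ι → R}
    (h : ∀ i, ε i * δ i = 1) :
    (blockDiagonal' fun i => ε i • exchangeMatrix R (n i)) *
      (blockDiagonal' fun i => δ i • exchangeMatrix R (n i)) = 1 := by
  simp only [← blockDiagonal'_mul, smul_mul_smul, exchangeMatrix_mul_self, h, one_smul]
  exact blockDiagonal'_one

/-- The Gram matrix `diag(ε₁ S_{n₁}, ..., ε_k S_{n_k})`, bundled as a unit of the matrix ring. -/
def exchangeBlocks (n : ι → ℕ) (ε : ι → Rˣ) :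
    (Matrix ((i : ι) × Fin (n i)) ((i : ι) × Fin (n i)) R)ˣ where
  val := blockDiagonal' fun i => (ε i : R) • exchangeMatrix R (n i)
  inv := blockDiagonal' fun i => (↑(ε i)⁻¹ : R) • exchangeMatrix R (n i)
  val_inv := blockDiagonal'_smul_exchangeMatrix_mul fun i => (ε i).mul_inv
  inv_val := blockDiagonal'_smul_exchangeMatrix_mul fun i => (ε i).inv_mul

theorem transpose_exchangeBlocks (n : ι → ℕ) (ε : ι → Rˣ) :
    (exchangeBlocks n ε).valᵀ = (exchangeBlocks n ε).val := by
  simp only [exchangeBlocks, blockDiagonal'_transpose, transpose_smul,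
    isTruncatedHankel_exchangeMatrix.transpose_eq_self]

theorem exchangeBlocks_mem_intertwiners (n : ι → ℕ) (ε : ι → Rˣ) :
    (exchangeBlocks n ε).val ∈
      intertwiners (blockDiagonal' fun i => nilpotentJordanBlock R (n i))ᵀ
        (blockDiagonal' fun i => nilpotentJordanBlock R (n i)) := by
  simp only [mem_intertwiners, exchangeBlocks, blockDiagonal'_transpose, ← blockDiagonal'_mul,
    Matrix.smul_mul, Matrix.mul_smul,
    mem_intertwiners.mp isTruncatedHankel_exchangeMatrix.mem_jordanIntertwiners]

end Gram

theorem finrank_skewCommutant_jordan [LinearOrder ι] [Nontrivial R]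
    (two_regular : (2 : R) ∈ nonZeroDivisors R) (n : ι → ℕ) (ε : ι → Rˣ) :
    Module.finrank R (skewCommutant (exchangeBlocks n ε).val
        (blockDiagonal' fun i => nilpotentJordanBlock R (n i))) =
      ∑ p : {p : ι × ι // p.1 < p.2}, min (n p.1.1) (n p.1.2) := by
  let toCoeffs := (skewCommutantEquiv (exchangeBlocks n ε) (transpose_exchangeBlocks n ε)
      (exchangeBlocks_mem_intertwiners n ε)).trans <|
    (skewIntertwinersEquivUpperBlocks two_regular fun _ _ hB =>
      (isTruncatedHankel_of_mem_intertwiners hB).transpose_eq_self).trans <|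
    LinearEquiv.piCongrRight fun p : {p : ι × ι // p.1 < p.2} =>
      intertwinersEquivCoeffs R (n p.1.1) (n p.1.2)
  rw [toCoeffs.finrank_eq, Module.finrank_pi_fintype]
  simp only [Module.finrank_fin_fun]

end JordanBlocks

theorem sum_min_eq_of_monotone {k : ℕ} {n : Fin k → ℕ} (hn : Monotone n) :
    ∑ p : {p : Fin k × Fin k // p.1 < p.2}, min (n p.1.1) (n p.1.2) =
      ∑ i : Fin k, (k - 1 - (i : ℕ)) * n i :=
  calc ∑ p : {p : Fin k × Fin k // p.1 < p.2}, min (n p.1.1) (n p.1.2)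
      = ∑ p : {p : Fin k × Fin k // p.1 < p.2}, n p.1.1 :=
        Finset.sum_congr rfl fun p _ => min_eq_left (hn p.2.le)
    _ = ∑ p : Fin k × Fin k with p.1 < p.2, n p.1 :=
        (Finset.sum_subtype _ (by simp) fun p : Fin k × Fin k => n p.1).symm
    _ = ∑ i, ∑ _j ∈ Finset.Ioi i, n i := by
        simp only [Finset.sum_filter, Fintype.sum_prod_type, ← Finset.filter_lt_eq_Ioi]
    _ = ∑ i : Fin k, (k - 1 - (i : ℕ)) * n i := by
        simp only [Finset.sum_const, Fin.card_Ioi, smul_eq_mul]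

theorem stmt10_general {R ι : Type*} [CommRing R] [Nontrivial R]
    (two_regular : (2 : R) ∈ nonZeroDivisors R) [Fintype ι] [LinearOrder ι] (n : ι → ℕ)
    (ε : ι → R) (hε : ∀ i, IsUnit (ε i))
    (L G : Matrix ((i : ι) × Fin (n i)) ((i : ι) × Fin (n i)) R)
    (hLdef : ∀ p q : (i : ι) × Fin (n i),
      L p q = if p.1 = q.1 ∧ (q.2 : ℕ) = (p.2 : ℕ) + 1 then 1 else 0)
    (hGdef : ∀ p q : (i : ι) × Fin (n i),
      G p q = if p.1 = q.1 ∧ (p.2 : ℕ) + (q.2 : ℕ) + 1 = n p.1 then ε p.1 else 0) :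
    Module.finrank R (Submodule.span R
        {X : Matrix ((i : ι) × Fin (n i)) ((i : ι) × Fin (n i)) R |
          (∀ u v, (X *ᵥ u) ⬝ᵥ (G *ᵥ v) = - u ⬝ᵥ (G *ᵥ (X *ᵥ v))) ∧ X * L = L * X}) =
      ∑ p : {p : ι × ι // p.1 < p.2}, min (n p.1.1) (n p.1.2) := by
  lift ε to ι → Rˣ using hε
  have hL : L = blockDiagonal' fun i => nilpotentJordanBlock R (n i) := by
    ext ⟨i, a⟩ ⟨j, b⟩
    rw [hLdef]
    by_cases h : i = j
    · subst h
      simp [nilpotentJordanBlock]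
    · simp [blockDiagonal'_apply_ne, h]
  have hG : G = (exchangeBlocks n ε).val := by
    ext ⟨i, a⟩ ⟨j, b⟩
    rw [hGdef]
    by_cases h : i = j
    · subst h
      simp [exchangeBlocks, exchangeMatrix]
    · simp [exchangeBlocks, blockDiagonal'_apply_ne, h]
  rw [setOf_skew_and_commute_eq_skewCommutant, Submodule.span_eq, hL, hG,
    finrank_skewCommutant_jordan two_regular]

/-- For `L = diag(J_{n₁}, ..., J_{n_k})` (with `n₁ ≤ ... ≤ n_k` positive)
and `g` the nondegenerate symmetric bilinear form with matrix
`G = diag(ε₁ S_{n₁}, ..., ε_k S_{n_k})`, `ε i ∈ {1, -1}`, the vector space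
`𝔤_L = {X : X g-skew-symmetric, XL = LX}` has dimension `Σ_{i=1}^{k} (k - i)·n_i`. -/
theorem stmt10 (k : ℕ) (n : Fin k → ℕ) (hpos : ∀ i, 0 < n i) (hmono : Monotone n)
    (ε : Fin k → ℝ) (hε : ∀ i, ε i = 1 ∨ ε i = -1)
    (L G : Matrix ((i : Fin k) × Fin (n i)) ((i : Fin k) × Fin (n i)) ℝ)
    (hLdef : ∀ p q : (i : Fin k) × Fin (n i),
      L p q = if p.1 = q.1 ∧ (q.2 : ℕ) = (p.2 : ℕ) + 1 then 1 else 0)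
    (hGdef : ∀ p q : (i : Fin k) × Fin (n i),
      G p q = if p.1 = q.1 ∧ (p.2 : ℕ) + (q.2 : ℕ) + 1 = n p.1 then ε p.1 else 0) :
    Module.finrank ℝ (Submodule.span ℝ
        {X : Matrix ((i : Fin k) × Fin (n i)) ((i : Fin k) × Fin (n i)) ℝ |
          (∀ u v, (X *ᵥ u) ⬝ᵥ (G *ᵥ v) = - u ⬝ᵥ (G *ᵥ (X *ᵥ v))) ∧ X * L = L * X}) =
      ∑ i : Fin k, (k - 1 - (i : ℕ)) * n i := by
  rw [← sum_min_eq_of_monotone hmono]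
  exact stmt10_general (mem_nonZeroDivisors_of_ne_zero two_ne_zero) n ε
    (fun i => by rcases hε i with h | h <;> simp [h]) L G hLdef hGdef
end
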